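/- Lower bound in the paper's interference example (Gaussian is the worst noise of a given power): let P > 0 and let g be a probability density on ℝ with ∫ x²·g(x) dx = P such that x ↦ (g ⋆ φ₂)(x)·log((g ⋆ φ₂)(x)) and x ↦ (g ⋆ φ₁)(x)·log((g ⋆ φ₁)(x)) are integrable. Then h(g ⋆ φ₂) − h(g ⋆ φ₁) ≥ (1/2)·log((P + 2)/(P + 1)), with equality when g = φ_P. (For the channel Ỹ = X̃ + Z̃ + Z with X̃ ~ N(0,1), Z ~ N(0,1) and Z̃ of density g with second moment P, the mutual information I(X̃; Ỹ) = h(g ⋆ φ₂) − h(g ⋆ φ₁) is minimized by taking Z̃ ~ N(0, P).) -/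

import Mathlib

/-!
Let `X` be standard Gaussian and let `N` be independent of `X` with density `q = g ⋆ φ₁`, whose
second moment is `M = P + 1`. By the semigroup property of Gaussian densities
(`conv_conv_gaussianDensity`), `N + X` has density `g ⋆ φ₂`, so the quantity to bound is the mutual
information `I(X; N + X) = h(N + X) - h(N)`.

The best linear estimate of `X` from `Y = N + X` is `Y / (M + 1)`, with mean square error
`s = M / (M + 1)`. Comparing the true joint law of `(N, Y)` with the law that has the same
`Y`-marginal, but under which `X` given `Y = y` is `N(y / (M + 1), s)`, Gibbs' inequality gives
`h(N + X) - h(N) ≥ -(1/2) log s = (1/2) log ((M + 1) / M)`: the Gaussian densities enter only through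
a quadratic polynomial, whose expectation depends on second moments alone. This is
`entropy_conv_sub_entropy_ge`, where Gibbs' inequality is the integral of
`A * log (B / A) ≤ B - A` over the plane.

For `g = φ_P` both convolutions are Gaussian densities and the entropies are explicit
(`conv_gaussianDensity`, `entropy_gaussianDensity`).
-/

open MeasureTheory

/-- Convolution of two functions on ℝ (with respect to Lebesgue measure). -/
noncomputable def conv (p q : ℝ → ℝ) : ℝ → ℝ :=
  fun x => ∫ t : ℝ, p t * q (x - t)

/-- The centered Gaussian density of variance `v`. -/
noncomputable def gaussianDensity (v : ℝ) (x : ℝ) : ℝ :=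
  (Real.sqrt (2 * Real.pi * v))⁻¹ * Real.exp (-(x ^ 2) / (2 * v))

/-- `f` is a probability density on `ℝ` with second moment `M`; the integrability of `x ^ 2 * f x`
is recorded because the Bochner integral alone does not give it when `M = 0`. -/
structure IsDensity (f : ℝ → ℝ) (M : ℝ) : Prop where
  meas : Measurable f
  nonneg : ∀ᵐ x : ℝ, 0 ≤ f x
  int : Integrable f
  int2 : Integrable (fun x : ℝ => x ^ 2 * f x)
  mass : ∫ x : ℝ, f x = 1
  mom2 : ∫ x : ℝ, x ^ 2 * f x = M

lemma IsDensity.int1 {f : ℝ → ℝ} {M : ℝ} (h : IsDensity f M) :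
    Integrable (fun x : ℝ => x * f x) := by
  refine (h.int.add h.int2).mono' (measurable_id.mul h.meas).aestronglyMeasurable ?_
  filter_upwards [h.nonneg] with x hx
  simp only [Pi.add_apply, norm_mul, Real.norm_eq_abs, abs_of_nonneg hx]
  have : |x| ≤ 1 + x ^ 2 := by
    rw [← sq_abs]; nlinarith [sq_nonneg (|x| - 1), abs_nonneg x]
  nlinarith [mul_le_mul_of_nonneg_right this hx]

/-! ### Gaussian densities -/

lemma gaussianDensity_eq {v : ℝ} (hv : 0 < v) :
    gaussianDensity v = ProbabilityTheory.gaussianPDFReal 0 v.toNNReal := by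
  ext x
  simp [gaussianDensity, ProbabilityTheory.gaussianPDFReal, hv.le]

lemma gaussianDensity_pos {v : ℝ} (hv : 0 < v) (x : ℝ) : 0 < gaussianDensity v x := by
  unfold gaussianDensity; positivity

lemma gaussianDensity_neg (v x : ℝ) : gaussianDensity v (-x) = gaussianDensity v x := by
  simp [gaussianDensity]

lemma gaussianDensity_le (v x : ℝ) (hv : 0 < v) :
    gaussianDensity v x ≤ (Real.sqrt (2 * Real.pi * v))⁻¹ := by
  unfold gaussianDensity
  refine mul_le_of_le_one_right (by positivity) (Real.exp_le_one_iff.2 ?_)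
  rw [neg_div]; exact neg_nonpos.2 (by positivity)

lemma measurable_gaussianDensity (v : ℝ) : Measurable (gaussianDensity v) := by
  unfold gaussianDensity; fun_prop

lemma log_gaussianDensity {v : ℝ} (hv : 0 < v) (x : ℝ) :
    Real.log (gaussianDensity v x) =
      -(1 / 2) * Real.log (2 * Real.pi * v) - x ^ 2 / (2 * v) := by
  unfold gaussianDensity
  rw [Real.log_mul (by positivity) (by positivity), Real.log_exp, Real.log_inv,
    Real.log_sqrt (by positivity)]
  ring

lemma integral_gaussianReal_eq {v : ℝ} (hv : 0 < v) (f : ℝ → ℝ) :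
    ∫ x, f x ∂(ProbabilityTheory.gaussianReal 0 v.toNNReal)
      = ∫ x, f x * gaussianDensity v x := by
  rw [ProbabilityTheory.integral_gaussianReal_eq_integral_smul
    (Real.toNNReal_pos.2 hv).ne', gaussianDensity_eq hv]
  simp [mul_comm]

lemma integral_id_mul_gaussianDensity {v : ℝ} (hv : 0 < v) :
    ∫ x : ℝ, x * gaussianDensity v x = 0 := by
  rw [← integral_gaussianReal_eq hv (fun x => x), ProbabilityTheory.integral_id_gaussianReal]

lemma isDensity_gaussian {v : ℝ} (hv : 0 < v) : IsDensity (gaussianDensity v) v := by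
  have hm : ∫ x : ℝ, x ^ 2 * gaussianDensity v x = v := by
    rw [← integral_gaussianReal_eq hv (fun x => x ^ 2)]
    have h := ProbabilityTheory.variance_fun_id_gaussianReal (μ := 0) (v := v.toNNReal)
    rw [ProbabilityTheory.variance_eq_integral (by fun_prop)] at h
    simpa [ProbabilityTheory.integral_id_gaussianReal, hv.le] using h
  refine ⟨measurable_gaussianDensity v, .of_forall fun x => (gaussianDensity_pos hv x).le, ?_,
    ?_, ?_, hm⟩
  · rw [gaussianDensity_eq hv]; exact ProbabilityTheory.integrable_gaussianPDFReal _ _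
  · by_contra h
    rw [integral_undef h] at hm
    exact hv.ne hm
  · rw [gaussianDensity_eq hv]
    exact ProbabilityTheory.integral_gaussianPDFReal_eq_one _
      (Real.toNNReal_pos.2 hv).ne'

/-- Completing the square in the product of two Gaussian densities. -/
lemma gaussianDensity_mul {a b : ℝ} (ha : 0 < a) (hb : 0 < b) (t x : ℝ) :
    gaussianDensity a t * gaussianDensity b (x - t) =
      gaussianDensity (a + b) x * gaussianDensity (a * b / (a + b)) (t - a * x / (a + b)) := by
  refine Real.log_injOn_pos (mul_pos (gaussianDensity_pos ha _) (gaussianDensity_pos hb _))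
    (mul_pos (gaussianDensity_pos (by positivity) _) (gaussianDensity_pos (by positivity) _)) ?_
  have hp := Real.pi_pos
  have h2 : Real.log (2 * Real.pi * a) + Real.log (2 * Real.pi * b) =
      Real.log (2 * Real.pi * (a + b)) + Real.log (2 * Real.pi * (a * b / (a + b))) := by
    rw [← Real.log_mul (by positivity) (by positivity),
      ← Real.log_mul (by positivity) (by positivity)]
    congr 1
    field_simp
  have h3 : t ^ 2 / (2 * a) + (x - t) ^ 2 / (2 * b) =
      x ^ 2 / (2 * (a + b)) + (t - a * x / (a + b)) ^ 2 / (2 * (a * b / (a + b))) := by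
    field_simp
    ring
  rw [Real.log_mul (gaussianDensity_pos ha _).ne' (gaussianDensity_pos hb _).ne',
    Real.log_mul (gaussianDensity_pos (by positivity) _).ne'
      (gaussianDensity_pos (by positivity) _).ne',
    log_gaussianDensity ha, log_gaussianDensity hb, log_gaussianDensity (by positivity),
    log_gaussianDensity (by positivity)]
  linarith

lemma conv_gaussianDensity {a b : ℝ} (ha : 0 < a) (hb : 0 < b) :
    conv (gaussianDensity a) (gaussianDensity b) = gaussianDensity (a + b) := by
  ext x
  simp only [conv, gaussianDensity_mul ha hb]
  rw [integral_const_mul, integral_sub_right_eq_self (fun t => gaussianDensity (a * b / (a + b)) t),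
    (isDensity_gaussian (by positivity)).mass, mul_one]

lemma entropy_gaussianDensity {v : ℝ} (hv : 0 < v) :
    -∫ x : ℝ, gaussianDensity v x * Real.log (gaussianDensity v x) =
      (1 / 2) * Real.log (2 * Real.pi * v) + 1 / 2 := by
  have hd := isDensity_gaussian hv
  have : ∀ x : ℝ, gaussianDensity v x * Real.log (gaussianDensity v x) =
      -(1 / 2) * Real.log (2 * Real.pi * v) * gaussianDensity v x
        - (1 / (2 * v)) * (x ^ 2 * gaussianDensity v x) := fun x => by
    rw [log_gaussianDensity hv]; ring
  simp only [this]
  rw [integral_sub (hd.int.const_mul _) (hd.int2.const_mul _), integral_const_mul,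
    integral_const_mul, hd.mass, hd.mom2]
  field_simp
  ring

/-! ### Shears of the plane, and convolutions -/

lemma integrable_shear_iff {F : ℝ × ℝ → ℝ} :
    Integrable (fun p : ℝ × ℝ => F (p.1, p.1 + p.2)) ↔ Integrable F :=
  (measurePreserving_prod_add (volume : Measure ℝ) (volume : Measure ℝ)).integrable_comp_emb
    (MeasurableEquiv.shearAddRight ℝ).measurableEmbedding

lemma integral_shear (F : ℝ × ℝ → ℝ) :
    ∫ p : ℝ × ℝ, F (p.1, p.1 + p.2) = ∫ p, F p :=
  (measurePreserving_prod_add (volume : Measure ℝ) (volume : Measure ℝ)).integral_comp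
    (MeasurableEquiv.shearAddRight ℝ).measurableEmbedding F

lemma integrable_shear_mul {f k : ℝ → ℝ} (hf : Integrable f) (hk : Integrable k) :
    Integrable (fun q : ℝ × ℝ => f q.1 * k (q.2 - q.1)) := by
  rw [← integrable_shear_iff]
  simp only [add_sub_cancel_left]
  exact hf.mul_prod hk

/-- The law of the sum: the expectation of `W (Z + X)` for independent `Z`, `X` with densities
`f`, `k` is computed with the density `conv f k`. -/
lemma integral_conv_mul {f k W : ℝ → ℝ}
    (h : Integrable (fun p : ℝ × ℝ => f p.1 * k p.2 * W (p.1 + p.2))) :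
    Integrable (fun y => conv f k y * W y) ∧
      ∫ y, conv f k y * W y = ∫ p : ℝ × ℝ, f p.1 * k p.2 * W (p.1 + p.2) := by
  have h' : Integrable (fun q : ℝ × ℝ => f q.1 * k (q.2 - q.1) * W q.2) := by
    rw [← integrable_shear_iff]; simpa using h
  have e : ∀ y, ∫ t, f t * k (y - t) * W y = conv f k y * W y := fun y => by
    rw [integral_mul_const]; rfl
  constructor
  · simpa only [e] using Integrable.integral_prod_right h'
  · have h1 := integral_shear (fun q : ℝ × ℝ => f q.1 * k (q.2 - q.1) * W q.2)
    simp only [add_sub_cancel_left] at h1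
    rw [h1]
    refine Eq.trans ?_ (integral_prod_symm _ h').symm
    simp only [e]

/-- Tonelli converse to `integral_conv_mul`. -/
lemma integrable_mul_of_conv {f k W : ℝ → ℝ} {M N : ℝ} (hf : IsDensity f M) (hk : IsDensity k N)
    (hkn : ∀ x, 0 ≤ k x)
    (hW : Measurable W) (h : Integrable (fun y => conv f k y * W y)) :
    Integrable (fun p : ℝ × ℝ => f p.1 * k p.2 * W (p.1 + p.2)) := by
  have hmf := hf.meas
  have hmk := hk.meas
  have hcint : ∀ᵐ y : ℝ, Integrable (fun t => f t * k (y - t)) :=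
    Integrable.prod_left_ae (integrable_shear_mul hf.int hk.int)
  have h' : Integrable (fun q : ℝ × ℝ => f q.1 * k (q.2 - q.1) * W q.2) := by
    refine (integrable_prod_iff' (Measurable.aestronglyMeasurable (by fun_prop))).2 ⟨?_, ?_⟩
    · filter_upwards [hcint] with y hy
      exact hy.mul_const _
    · refine h.abs.congr (.of_forall fun y => ?_)
      have hn : ∀ᵐ t : ℝ, ‖f t * k (y - t) * W y‖ = f t * k (y - t) * |W y| := by
        filter_upwards [hf.nonneg] with t ht
        rw [norm_mul, Real.norm_of_nonneg (mul_nonneg ht (hkn _)), Real.norm_eq_abs]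
      have hc : 0 ≤ conv f k y :=
        integral_nonneg_of_ae (by
          filter_upwards [hf.nonneg] with t ht using mul_nonneg ht (hkn _))
      simp only
      rw [integral_congr_ae hn, integral_mul_const, abs_mul, abs_of_nonneg hc]
      rfl
  rw [← integrable_shear_iff] at h'
  simpa using h'

/-- Expectation of a quadratic polynomial in two independent variables, one of them centered. -/
lemma integral_quadratic {f k : ℝ → ℝ} {M N : ℝ} (hf : IsDensity f M) (hk : IsDensity k N)
    (hk1 : ∫ x, x * k x = 0) (c₀ c₁ c₂ c₃ : ℝ) :
    Integrable (fun p : ℝ × ℝ => f p.1 * k p.2 *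
        (c₀ + c₁ * p.1 ^ 2 + c₂ * p.2 ^ 2 + c₃ * (p.1 * p.2))) ∧
      ∫ p : ℝ × ℝ, f p.1 * k p.2 * (c₀ + c₁ * p.1 ^ 2 + c₂ * p.2 ^ 2 + c₃ * (p.1 * p.2))
        = c₀ + c₁ * M + c₂ * N := by
  have e : ∀ p : ℝ × ℝ, f p.1 * k p.2 * (c₀ + c₁ * p.1 ^ 2 + c₂ * p.2 ^ 2 + c₃ * (p.1 * p.2)) =
      c₀ * (f p.1 * k p.2) + c₁ * (p.1 ^ 2 * f p.1 * k p.2) + c₂ * (f p.1 * (p.2 ^ 2 * k p.2)) +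
        c₃ * ((p.1 * f p.1) * (p.2 * k p.2)) := fun p => by ring
  have i0 := (hf.int.mul_prod hk.int).const_mul c₀
  have i1 := (hf.int2.mul_prod hk.int).const_mul c₁
  have i2 := (hf.int.mul_prod hk.int2).const_mul c₂
  have i3 := (hf.int1.mul_prod hk.int1).const_mul c₃
  simp only [e]
  refine ⟨((i0.add i1).add i2).add i3, ?_⟩
  refine (integral_add ((i0.add i1).add i2) i3).trans ?_
  rw [integral_add' (i0.add i1) i2, integral_add' i0 i1]
  simp only [integral_const_mul]
  rw [integral_prod_mul f k, integral_prod_mul (fun x => x ^ 2 * f x) k,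
    integral_prod_mul f (fun x => x ^ 2 * k x),
    integral_prod_mul (fun x => x * f x) (fun x => x * k x), hf.mass, hk.mass, hf.mom2, hk.mom2,
    hk1]
  ring

lemma measurable_conv {f k : ℝ → ℝ} (hf : Measurable f) (hk : Measurable k) :
    Measurable (conv f k) := by
  have : StronglyMeasurable (fun q : ℝ × ℝ => f q.2 * k (q.1 - q.2)) :=
    Measurable.stronglyMeasurable (by fun_prop)
  exact this.integral_prod_right'.measurable

lemma integrable_mul_gaussianDensity {f : ℝ → ℝ} {v : ℝ} (hv : 0 < v) (hf : Integrable f)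
    (y : ℝ) : Integrable (fun t => f t * gaussianDensity v (y - t)) :=
  hf.mul_bdd (c := (Real.sqrt (2 * Real.pi * v))⁻¹)
    ((measurable_gaussianDensity v).comp (measurable_const.sub measurable_id)).aestronglyMeasurable
    (.of_forall fun t => by
      rw [Real.norm_of_nonneg (gaussianDensity_pos hv _).le]; exact gaussianDensity_le v _ hv)

lemma conv_pos {f : ℝ → ℝ} {M v : ℝ} (hf : IsDensity f M) (hv : 0 < v) (y : ℝ) :
    0 < conv f (gaussianDensity v) y := by
  have hs : Function.support (fun t => f t * gaussianDensity v (y - t)) = Function.support f := by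
    ext t; simp [(gaussianDensity_pos hv (y - t)).ne']
  refine (integral_pos_iff_support_of_nonneg_ae ?_ (integrable_mul_gaussianDensity hv hf.int y)).2 ?_
  · filter_upwards [hf.nonneg] with t ht using mul_nonneg ht (gaussianDensity_pos hv _).le
  · rw [hs, ← integral_pos_iff_support_of_nonneg_ae hf.nonneg hf.int, hf.mass]
    exact one_pos

lemma isDensity_conv {f : ℝ → ℝ} {M v : ℝ} (hf : IsDensity f M) (hv : 0 < v) :
    IsDensity (conv f (gaussianDensity v)) (M + v) := by
  have hk := isDensity_gaussian hv
  have q0 := integral_quadratic hf hk (integral_id_mul_gaussianDensity hv) 1 0 0 0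
  have q2 := integral_quadratic hf hk (integral_id_mul_gaussianDensity hv) 0 1 1 2
  have e0 : ∀ p : ℝ × ℝ, (1 : ℝ) + 0 * p.1 ^ 2 + 0 * p.2 ^ 2 + 0 * (p.1 * p.2) = 1 :=
    fun p => by ring
  have e2 : ∀ p : ℝ × ℝ, (0 : ℝ) + 1 * p.1 ^ 2 + 1 * p.2 ^ 2 + 2 * (p.1 * p.2)
      = (p.1 + p.2) ^ 2 := fun p => by ring
  simp only [e0] at q0
  simp only [e2] at q2
  have r0 := integral_conv_mul (W := fun _ => 1) q0.1
  have r2 := integral_conv_mul (W := fun y => y ^ 2) q2.1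
  rw [q0.2] at r0
  rw [q2.2] at r2
  simp only [mul_one] at r0
  simp only [mul_comm (conv f _ _)] at r2
  exact ⟨measurable_conv hf.meas hk.meas, .of_forall fun y => (conv_pos hf hv y).le, r0.1, r2.1,
    by rw [r0.2]; ring, by rw [r2.2]; ring⟩

lemma conv_conv_gaussianDensity {f : ℝ → ℝ} (hf : Integrable f)
    {a b : ℝ} (ha : 0 < a) (hb : 0 < b) :
    conv (conv f (gaussianDensity a)) (gaussianDensity b) =
      conv f (gaussianDensity (a + b)) := by
  ext y
  have h0 := integrable_shear_mul hf (isDensity_gaussian ha).int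
  have h1 : Integrable (fun q : ℝ × ℝ =>
      f q.1 * gaussianDensity a (q.2 - q.1) * gaussianDensity b (y - q.2)) :=
    h0.mul_bdd (c := (Real.sqrt (2 * Real.pi * b))⁻¹)
      ((measurable_gaussianDensity b).comp
        (measurable_const.sub measurable_snd)).aestronglyMeasurable
      (.of_forall fun t => by
        rw [Real.norm_of_nonneg (gaussianDensity_pos hb _).le]; exact gaussianDensity_le b _ hb)
  have h2 := (integral_prod_symm _ h1).symm.trans (integral_prod _ h1)
  simp only [integral_mul_const] at h2
  refine h2.trans ?_
  unfold conv
  congr 1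
  ext t
  rw [← conv_gaussianDensity ha hb]
  simp only [mul_assoc, integral_const_mul]
  congr 1
  unfold conv
  rw [← integral_sub_right_eq_self
    (fun s => gaussianDensity a s * gaussianDensity b (y - t - s)) t]
  simp only [sub_sub_sub_cancel_right]

/-! ### The entropy inequality -/

/-- Gibbs' inequality between the joint law of `(N, N + X)`, where `X` is standard Gaussian and
`N` has density `q`, and the law with the same second marginal under which `X` given the sum `y`
is `N(y / (M + 1), M / (M + 1))`. -/
lemma entropy_conv_sub_entropy_ge {q : ℝ → ℝ} {M : ℝ} (hq : IsDensity q M) (hM : 0 < M)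
    (hpos : ∀ z, 0 < q z)
    (h1 : Integrable (fun z => q z * Real.log (q z)))
    (h2 : Integrable (fun y => conv q (gaussianDensity 1) y *
      Real.log (conv q (gaussianDensity 1) y))) :
    (1 / 2) * Real.log ((M + 1) / M) ≤
      (-∫ y, conv q (gaussianDensity 1) y * Real.log (conv q (gaussianDensity 1) y)) -
        (-∫ z, q z * Real.log (q z)) := by
  have hφ := isDensity_gaussian one_pos
  set φ := gaussianDensity 1 with hφdef
  set r := conv q φ with hr
  have hrd : IsDensity r (M + 1) := isDensity_conv hq one_pos
  have hrpos : ∀ y, 0 < r y := conv_pos hq one_pos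
  have hs : 0 < M / (M + 1) := by positivity
  set s := M / (M + 1) with hsdef
  set ρ := gaussianDensity s with hρdef
  have hρ : IsDensity ρ s := isDensity_gaussian hs
  -- the regression residual `X - (N + X) / (M + 1)`
  let w : ℝ × ℝ → ℝ := fun p => p.2 - (p.1 + p.2) / (M + 1)
  have hφp : ∀ x, 0 < φ x := gaussianDensity_pos one_pos
  have hρp : ∀ x, 0 < ρ x := gaussianDensity_pos hs
  -- the three contributions to the relative entropy
  have iA : Integrable (fun p : ℝ × ℝ => q p.1 * φ p.2 * Real.log (r (p.1 + p.2))) :=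
    integrable_mul_of_conv (W := fun y => Real.log (r y)) hq hφ (fun x => (hφp x).le)
      (Real.measurable_log.comp hrd.meas) h2
  have eA := (integral_conv_mul (W := fun y => Real.log (r y)) iA).2
  have iB : Integrable (fun p : ℝ × ℝ => q p.1 * Real.log (q p.1) * φ p.2) :=
    h1.mul_prod hφ.int
  have eB : ∫ p : ℝ × ℝ, q p.1 * Real.log (q p.1) * φ p.2 = ∫ z, q z * Real.log (q z) := by
    rw [Measure.volume_eq_prod, integral_prod_mul (fun z => q z * Real.log (q z)) φ, hφ.mass,
      mul_one]
  have hL : ∀ p : ℝ × ℝ, Real.log (ρ (w p)) - Real.log (φ p.2) =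
      -(1 / 2) * Real.log s + -(1 / (2 * s * (M + 1) ^ 2)) * p.1 ^ 2
        + (1 / 2 - M ^ 2 / (2 * s * (M + 1) ^ 2)) * p.2 ^ 2
        + (M / (s * (M + 1) ^ 2)) * (p.1 * p.2) := fun p => by
    rw [hρdef, hφdef, log_gaussianDensity hs, log_gaussianDensity one_pos,
      Real.log_mul (by positivity) hs.ne', mul_one]
    have hw : w p = (M * p.2 - p.1) / (M + 1) := by
      simp only [w]; field_simp; ring
    rw [hw]
    field_simp
    ring
  obtain ⟨iC, eC⟩ := integral_quadratic hq hφ (integral_id_mul_gaussianDensity one_pos)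
    (-(1 / 2) * Real.log s) (-(1 / (2 * s * (M + 1) ^ 2)))
    (1 / 2 - M ^ 2 / (2 * s * (M + 1) ^ 2)) (M / (s * (M + 1) ^ 2))
  simp only [← hL] at iC eC
  have eC' : ∫ p : ℝ × ℝ, q p.1 * φ p.2 * (Real.log (ρ (w p)) - Real.log (φ p.2)) =
      (1 / 2) * Real.log ((M + 1) / M) := by
    rw [eC, show (M + 1) / M = s⁻¹ by rw [hsdef, inv_div], Real.log_inv, hsdef]
    field_simp
    ring
  -- both laws have total mass one
  have iD : Integrable (fun p : ℝ × ℝ => q p.1 * φ p.2) := hq.int.mul_prod hφ.int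
  have eD : ∫ p : ℝ × ℝ, q p.1 * φ p.2 = 1 := by
    rw [Measure.volume_eq_prod, integral_prod_mul q φ, hq.mass, hφ.mass, mul_one]
  have key : ∀ y z : ℝ, ρ (w (z, y - z)) = ρ (y * (M / (M + 1)) - z) := fun y z => by
    congr 1; simp only [w]; field_simp; ring
  have hρi : ∀ y : ℝ, Integrable (fun z => r y * ρ (y * (M / (M + 1)) - z)) := fun y =>
    (hρ.int.comp_sub_left _).const_mul _
  have hρe : ∀ y : ℝ, ∫ z, r y * ρ (y * (M / (M + 1)) - z) = r y := fun y => by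
    rw [integral_const_mul, integral_sub_left_eq_self ρ volume, hρ.mass, mul_one]
  have hmr := hrd.meas
  have hmρ := hρ.meas
  have iE' : Integrable (fun p : ℝ × ℝ => r p.2 * ρ (p.2 * (M / (M + 1)) - p.1)) := by
    refine (integrable_prod_iff' (Measurable.aestronglyMeasurable (by fun_prop))).2
      ⟨.of_forall hρi, ?_⟩
    refine hrd.int.congr (.of_forall fun y => ?_)
    simp only [Real.norm_of_nonneg (mul_pos (hrpos _) (hρp _)).le]
    exact (hρe y).symm
  have eE' : ∫ p : ℝ × ℝ, r p.2 * ρ (p.2 * (M / (M + 1)) - p.1) = 1 := by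
    refine (integral_prod_symm _ iE').trans ?_
    simp only [hρe]
    exact hrd.mass
  have hE : ∀ p : ℝ × ℝ, r (p.1 + p.2) * ρ ((p.1 + p.2) * (M / (M + 1)) - p.1)
      = r (p.1 + p.2) * ρ (w p) := fun p => by
    rw [← key]; simp
  have iE : Integrable (fun p : ℝ × ℝ => r (p.1 + p.2) * ρ (w p)) := by
    simpa only [hE] using integrable_shear_iff.2 iE'
  have eE : ∫ p : ℝ × ℝ, r (p.1 + p.2) * ρ (w p) = 1 := by
    have := (integral_shear (fun p : ℝ × ℝ => r p.2 * ρ (p.2 * (M / (M + 1)) - p.1))).trans eE'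
    simp only [hE] at this
    exact this
  -- `A * log (B / A) ≤ B - A`, where `A` and `B` are the densities of the two laws
  have hmono : ∀ p : ℝ × ℝ,
      q p.1 * φ p.2 * Real.log (r (p.1 + p.2)) - q p.1 * Real.log (q p.1) * φ p.2
        + q p.1 * φ p.2 * (Real.log (ρ (w p)) - Real.log (φ p.2))
      ≤ r (p.1 + p.2) * ρ (w p) - q p.1 * φ p.2 := fun p => by
    have hA : 0 < q p.1 * φ p.2 := mul_pos (hpos _) (hφp _)
    have hB : 0 < r (p.1 + p.2) * ρ (w p) := mul_pos (hrpos _) (hρp _)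
    have h := mul_le_mul_of_nonneg_left (Real.log_le_sub_one_of_pos (div_pos hB hA)) hA.le
    rw [Real.log_div hB.ne' hA.ne', Real.log_mul (hrpos _).ne' (hρp _).ne',
      Real.log_mul (hpos _).ne' (hφp _).ne', mul_sub _ (_ / _), mul_div_cancel₀ _ hA.ne'] at h
    linarith
  have hfin := integral_mono ((iA.sub iB).add iC) (iE.sub iD) hmono
  rw [integral_sub' iE iD, integral_add' (iA.sub iB) iC, integral_sub' iA iB, eE, eD, eB, eC',
    ← eA] at hfin
  linarith

/-- lower bound in the paper's interference example (Gaussian is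
the worst noise of a given power): for any probability density `g` with second
moment `P`, the mutual information `h(g ⋆ φ₂) − h(g ⋆ φ₁)` is at least
`(1/2)·log((P+2)/(P+1))`, with equality when `g = φ_P`. -/
theorem stmt_13 (P : ℝ) (hP : 0 < P) (g : ℝ → ℝ)
    (hmeas : Measurable g) (hnn : ∀ᵐ x : ℝ, 0 ≤ g x) (hint : ∫ x : ℝ, g x = 1)
    (hmom : ∫ x : ℝ, x ^ 2 * g x = P)
    (hlog₂ : Integrable (fun x : ℝ =>
      conv g (gaussianDensity 2) x * Real.log (conv g (gaussianDensity 2) x)))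
    (hlog₁ : Integrable (fun x : ℝ =>
      conv g (gaussianDensity 1) x * Real.log (conv g (gaussianDensity 1) x))) :
    ((1 / 2) * Real.log ((P + 2) / (P + 1)) ≤
      (-∫ x : ℝ, conv g (gaussianDensity 2) x *
          Real.log (conv g (gaussianDensity 2) x)) -
        (-∫ x : ℝ, conv g (gaussianDensity 1) x *
          Real.log (conv g (gaussianDensity 1) x))) ∧
    ((-∫ x : ℝ, conv (gaussianDensity P) (gaussianDensity 2) x *
        Real.log (conv (gaussianDensity P) (gaussianDensity 2) x)) -
      (-∫ x : ℝ, conv (gaussianDensity P) (gaussianDensity 1) x *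
        Real.log (conv (gaussianDensity P) (gaussianDensity 1) x)) =
      (1 / 2) * Real.log ((P + 2) / (P + 1))) := by
  have hP1 : (0 : ℝ) < P + 1 := by positivity
  have hP2 : (0 : ℝ) < P + 2 := by positivity
  have h11 : (1 : ℝ) + 1 = 2 := by norm_num
  have hg : IsDensity g P := by
    refine ⟨hmeas, hnn, ?_, ?_, hint, hmom⟩
    · by_contra h
      rw [integral_undef h] at hint
      exact one_ne_zero hint.symm
    · by_contra h
      rw [integral_undef h] at hmom
      exact hP.ne hmom
  constructor
  · have hsemi := conv_conv_gaussianDensity hg.int one_pos one_pos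
    rw [h11] at hsemi
    have h := entropy_conv_sub_entropy_ge (isDensity_conv hg one_pos) hP1
      (conv_pos hg one_pos) hlog₁ (by rw [hsemi]; exact hlog₂)
    rw [hsemi, add_assoc, h11] at h
    exact h
  · rw [conv_gaussianDensity hP two_pos, conv_gaussianDensity hP one_pos,
      entropy_gaussianDensity hP2, entropy_gaussianDensity hP1,
      Real.log_mul (by positivity) hP2.ne', Real.log_mul (by positivity) hP1.ne',
      Real.log_div hP2.ne' hP1.ne']
    ring
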